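/- Let Q_0 be a finite set and let α ∈ ℕ^{Q_0} be nonzero and indivisible (the greatest common divisor of its coordinates is 1). Then there exists a weight λ ∈ ℤ^{Q_0} that is generic with respect to α, i.e., λ(α) = 0 and λ(β) ≠ 0 for every β ∈ ℕ^{Q_0} with 0 ≤ β ≤ α componentwise and β ∉ {0, α}. -/

import Mathlib

open scoped BigOperators

/-!
A nonzero vector `β ≤ α` proportional to `α` is an integer multiple of `α`, because `α` is
indivisible, hence equal to `α`. For every other `β` some `2 × 2` minor of the pair `(α, β)` is
nonzero, so the weights orthogonal to both form a proper subspace of the rational hyperplane `α^⊥`.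
Finitely many proper subspaces do not cover `α^⊥`, and clearing denominators in a vector of `α^⊥`
outside all of them gives the weight.
-/

section Orthogonal

variable {ι κ : Type*} [Fintype ι]

theorem exists_dotProduct_eq_zero_and_ne_zero {R : Type*} [CommRing R] {v w : ι → R}
    (hvw : ∃ i j, v i * w j ≠ v j * w i) : ∃ x : ι → R, x ⬝ᵥ v = 0 ∧ x ⬝ᵥ w ≠ 0 := by
  classical
  obtain ⟨i, j, hij⟩ := hvw
  refine ⟨Pi.single j (v i) - Pi.single i (v j), ?_, ?_⟩
  · simp only [sub_dotProduct, single_dotProduct, mul_comm (v i), sub_self]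
  · simpa only [sub_dotProduct, single_dotProduct] using sub_ne_zero.mpr hij

theorem exists_dotProduct_eq_zero_and_forall_ne_zero_of_field {K : Type*} [Field K] [Infinite K]
    [Finite κ] {v : ι → K} {w : κ → ι → K} (hvw : ∀ k, ∃ i j, v i * w k j ≠ v j * w k i) :
    ∃ x : ι → K, x ⬝ᵥ v = 0 ∧ ∀ k, x ⬝ᵥ w k ≠ 0 := by
  let pairing (u : ι → K) : Module.Dual K (ι → K) := (dotProductBilin K K).flip u
  exact Module.Dual.exists_forall_mem_ne_zero_of_forall_exists
    (LinearMap.ker (pairing v)) (fun k ↦ pairing (w k))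
    fun k ↦ exists_dotProduct_eq_zero_and_ne_zero (hvw k)

theorem exists_dotProduct_eq_zero_and_forall_ne_zero {R : Type*} [CommRing R] [IsDomain R]
    [Infinite R] [Finite κ] {v : ι → R} {w : κ → ι → R}
    (hvw : ∀ k, ∃ i j, v i * w k j ≠ v j * w k i) :
    ∃ x : ι → R, x ⬝ᵥ v = 0 ∧ ∀ k, x ⬝ᵥ w k ≠ 0 := by
  let K := FractionRing R
  let φ : R →+* K := algebraMap R K
  have φ_injective : Function.Injective φ := IsFractionRing.injective R K
  have : Infinite K := .of_injective φ φ_injective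
  obtain ⟨y, hyv, hyw⟩ : ∃ y : ι → K, y ⬝ᵥ (φ ∘ v) = 0 ∧ ∀ k, y ⬝ᵥ (φ ∘ w k) ≠ 0 := by
    refine exists_dotProduct_eq_zero_and_forall_ne_zero_of_field fun k ↦ ?_
    obtain ⟨i, j, hij⟩ := hvw k
    exact ⟨i, j, by simpa only [Function.comp_apply, ← map_mul] using φ_injective.ne hij⟩
  obtain ⟨d, hd⟩ := IsLocalization.exist_integer_multiples_of_finite (nonZeroDivisors R) y
  choose x hx using hd
  have map_dotProduct (u : ι → R) : φ (x ⬝ᵥ u) = (d : R) • (y ⬝ᵥ (φ ∘ u)) := by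
    rw [RingHom.map_dotProduct, ← smul_dotProduct]
    exact congrArg (· ⬝ᵥ (φ ∘ u)) (funext hx)
  refine ⟨x, φ_injective ?_, fun k hk ↦ hyw k ?_⟩
  · rw [map_dotProduct, hyv, smul_zero, map_zero]
  · have hsmul : (d : R) • (y ⬝ᵥ (φ ∘ w k)) = 0 := by rw [← map_dotProduct, hk, map_zero]
    exact (smul_eq_zero.mp hsmul).resolve_left (nonZeroDivisors.coe_ne_zero d)

end Orthogonal

theorem exists_eq_smul_of_gcd_eq_one {ι M : Type*} [Fintype ι] [CommMonoidWithZero M]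
    [Nontrivial M] [NormalizedGCDMonoid M] {v w : ι → M}
    (hv : Finset.univ.gcd v = 1) (hvw : ∀ i j, v i * w j = v j * w i) : ∃ c : M, w = c • v := by
  obtain ⟨j, hj⟩ : ∃ j, v j ≠ 0 := by
    by_contra! hzero
    exact zero_ne_one ((Finset.gcd_eq_zero_iff.mpr fun i _ ↦ hzero i).symm.trans hv)
  have hdvd : v j ∣ w j := by
    have : v j ∣ Finset.univ.gcd fun i ↦ w j * v i :=
      Finset.dvd_gcd fun i _ ↦ ⟨w i, by rw [mul_comm, hvw]⟩
    rwa [(Finset.gcd_mul_left' ..).dvd_iff_dvd_right, hv, mul_one] at this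
  obtain ⟨c, hc⟩ := hdvd
  refine ⟨c, funext fun i ↦ mul_left_cancel₀ hj ?_⟩
  calc v j * w i = v i * (v j * c) := by rw [← hc, hvw]
    _ = v j * (c • v) i := by rw [Pi.smul_apply, smul_eq_mul, mul_left_comm, mul_comm c]

theorem exists_mul_ne_mul_of_le_of_gcd_eq_one {ι : Type*} [Fintype ι] {α β : ι → ℕ}
    (hα : Finset.univ.gcd α = 1) (hle : β ≤ α) (hβ₀ : β ≠ 0) (hβα : β ≠ α) :
    ∃ i j, α i * β j ≠ α j * β i := by
  by_contra! hprop
  obtain ⟨c, rfl⟩ := exists_eq_smul_of_gcd_eq_one hα hprop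
  have hc : c ≠ 0 := by
    rintro rfl
    exact hβ₀ (zero_smul ℕ α)
  exact hβα (hle.antisymm fun i ↦ Nat.le_mul_of_pos_left (α i) (Nat.pos_of_ne_zero hc))

/-- For every nonzero indivisible dimension vector `α ∈ ℕ^{Q₀}` there is a weight
`λ ∈ ℤ^{Q₀}` generic with respect to `α`: `λ(α) = 0` and `λ(β) ≠ 0` for every
`β ∈ ℕ^{Q₀}` with `0 ≤ β ≤ α` componentwise and `β ∉ {0, α}`. -/
theorem exists_generic_weight
    (Q₀ : Type) [Fintype Q₀] (α : Q₀ → ℕ) (hα : α ≠ 0)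
    (hind : Finset.univ.gcd α = 1) :
    ∃ lam : Q₀ → ℤ,
      (∑ i, lam i * (α i : ℤ)) = 0 ∧
        ∀ β : Q₀ → ℕ, (∀ i, β i ≤ α i) → β ≠ 0 → β ≠ α →
          (∑ i, lam i * (β i : ℤ)) ≠ 0 := by
  classical
  let S : Set (Q₀ → ℕ) := {β | β ≤ α ∧ β ≠ 0 ∧ β ≠ α}
  have : Finite S := ((Set.finite_Iic α).subset fun _ hβ ↦ hβ.1).to_subtype
  have hminor (β : S) : ∃ i j, (α i : ℤ) * (β.1 j : ℤ) ≠ (α j : ℤ) * (β.1 i : ℤ) := by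
    obtain ⟨hle, hβ₀, hβα⟩ := β.2
    exact_mod_cast exists_mul_ne_mul_of_le_of_gcd_eq_one hind hle hβ₀ hβα
  obtain ⟨lam, hlamα, hlamS⟩ := exists_dotProduct_eq_zero_and_forall_ne_zero hminor
  exact ⟨lam, hlamα, fun β hle hβ₀ hβα ↦ hlamS ⟨β, hle, hβ₀, hβα⟩⟩
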